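/- Let G = (V,E) be an infinite, connected, simple graph with maximum degree at most 3 and nonnegative Ricci curvature (κ(u,v) ≥ 0 for every edge {u,v}). Suppose G contains a two-sided infinite geodesic line, i.e. vertices (w_n)_{n∈ℤ} with w_n ∼ w_{n+1} for all n and d(w_m, w_n) = |m − n| for all m, n ∈ ℤ. Then G is isomorphic to the two-sided infinite path P_ℤ or to the infinite ladder P_ℤ □ K_2. -/

import Mathlib

open SimpleGraph

variable {V : Type*}

/-- Combinatorial (unnormalized) graph Laplacian. -/
def lapl (G : SimpleGraph V) [G.LocallyFinite] (f : V → ℝ) (x : V) : ℝ :=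
  ∑ y ∈ G.neighborFinset x, (f y - f x)

/-- Lin-Lu-Yau-Ollivier Ricci curvature (limit-free definition):
`κ(u,v) = inf { Δf(u) − Δf(v) : f 1-Lipschitz w.r.t. graph distance, f v − f u = 1 }`. -/
noncomputable def ricci (G : SimpleGraph V) [G.LocallyFinite] (u v : V) : ℝ :=
  sInf { r : ℝ | ∃ f : V → ℝ,
    (∀ x y : V, |f x - f y| ≤ (G.dist x y : ℝ)) ∧ f v - f u = 1 ∧
    r = lapl G f u - lapl G f v }

/-- Nonnegative Ricci curvature on every edge. -/
def NonnegRicci (G : SimpleGraph V) [G.LocallyFinite] : Prop :=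
  ∀ u v : V, G.Adj u v → 0 ≤ ricci G u v
/-- The two-sided infinite path `P_ℤ`: vertices `ℤ`, with `n ∼ n+1`. -/
def pathZ : SimpleGraph ℤ := SimpleGraph.fromRel (fun m n => n = m + 1)

/-- The infinite ladder `P_ℤ □ K_2`. -/
def infiniteLadder : SimpleGraph (ℤ × Fin 2) :=
  pathZ.boxProd (⊤ : SimpleGraph (Fin 2))

/-- The integer-valued combinatorial Laplacian. -/
def intLapl (G : SimpleGraph V) [G.LocallyFinite] (f : V → ℤ) (x : V) : ℤ :=
  ∑ y ∈ G.neighborFinset x, (f y - f x)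

/-- `f` changes by at most one along every edge. -/
def EdgeLip (G : SimpleGraph V) (f : V → ℤ) : Prop :=
  ∀ x y, G.Adj x y → f y ≤ f x + 1

/-- A bi-infinite path `u` along which `b` increases by one at every step. -/
structure RisingLine (G : SimpleGraph V) (b : V → ℤ) (u : ℤ → V) : Prop where
  adj : ∀ k, G.Adj (u k) (u (k + 1))
  val : ∀ k, b (u k) = k

section

variable {G : SimpleGraph V}

theorem EdgeLip.le_add_dist {f : V → ℤ} (hf : EdgeLip G f) (hconn : G.Connected) (x y : V) :
    f y ≤ f x + G.dist x y := by
  obtain ⟨p, hp⟩ := hconn.exists_walk_length_eq_dist x y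
  rw [← hp]
  clear hp
  induction p with
  | nil => simp
  | cons h p ih =>
    have := hf _ _ h
    rw [Walk.length_cons]
    push_cast
    omega

theorem EdgeLip.max_sub_dist {b : V → ℤ} (hb : EdgeLip G b) (hconn : G.Connected) (c : ℤ)
    (z : V) : EdgeLip G fun x => max (b x) (c - G.dist x z) := by
  intro x y hxy
  have h₁ := hb x y hxy
  have h₂ := hconn.dist_triangle (u := x) (v := y) (w := z)
  rw [dist_eq_one_iff_adj.2 hxy] at h₂
  simp only
  omega

theorem exists_rising_ray {b : V → ℤ} (h : ∀ x, ∃ y, G.Adj x y ∧ b y = b x + 1) (x : V) :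
    ∃ s : ℕ → V, s 0 = x ∧ (∀ i, G.Adj (s i) (s (i + 1))) ∧ ∀ i, b (s i) = b x + i := by
  choose g hg using h
  refine ⟨fun i => g^[i] x, rfl, fun i => ?_, fun i => ?_⟩
  · simp only [Function.iterate_succ_apply', (hg _).1]
  · induction i with
    | zero => simp
    | succ i ih =>
      simp only [Function.iterate_succ_apply', (hg _).2] at ih ⊢
      push_cast
      omega

theorem RisingLine.adj_pred {b : V → ℤ} {u : ℤ → V} (h : RisingLine G b u) (k : ℤ) :
    G.Adj (u k) (u (k - 1)) := by
  simpa using (h.adj (k - 1)).symm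

theorem RisingLine.ne_of_ne {b : V → ℤ} {u : ℤ → V} (h : RisingLine G b u) {j k : ℤ}
    (hjk : j ≠ k) : u j ≠ u k := fun he =>
  hjk (by rw [← h.val j, he, h.val])

theorem RisingLine.adj_iff {b : V → ℤ} {u : ℤ → V} (h : RisingLine G b u) (hb : EdgeLip G b)
    (j k : ℤ) : G.Adj (u j) (u k) ↔ pathZ.Adj j k := by
  simp only [pathZ, fromRel_adj]
  refine ⟨fun hjk => ?_, ?_⟩
  · have h₁ := hb _ _ hjk
    have h₂ := hb _ _ hjk.symm
    have h₃ : j ≠ k := by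
      rintro rfl
      exact G.irrefl hjk
    simp only [h.val] at h₁ h₂
    omega
  · rintro ⟨-, rfl | rfl⟩
    exacts [h.adj j, (h.adj k).symm]

/-- The Busemann function `b x = max (n - d(x, w n))` of a geodesic line. -/
theorem exists_busemann (hconn : G.Connected) {w : ℤ → V} (hadj : ∀ n, G.Adj (w n) (w (n + 1)))
    (hgeo : ∀ m n : ℤ, G.dist (w m) (w n) = (m - n).natAbs) :
    ∃ b : V → ℤ, EdgeLip G b ∧ RisingLine G b w ∧ ∀ x, ∃ n, (G.dist x (w n) : ℤ) = n - b x := by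
  have hmax : ∀ x, ∃ c : ℤ, (∃ n, (G.dist x (w n) : ℤ) = n - c) ∧ ∀ n, n - G.dist x (w n) ≤ c := by
    intro x
    have hbdd : ∀ c, (∃ n : ℤ, n - G.dist x (w n) = c) → c ≤ G.dist x (w 0) := by
      rintro _ ⟨n, rfl⟩
      have h₁ := hconn.dist_triangle (u := w 0) (v := x) (w := w n)
      rw [hgeo, G.dist_comm (u := w 0)] at h₁
      omega
    obtain ⟨c, ⟨n, hn⟩, hc⟩ := Int.exists_greatest_of_bdd ⟨_, hbdd⟩ ⟨_, 0, rfl⟩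
    exact ⟨c, ⟨n, by omega⟩, fun n => hc _ ⟨n, rfl⟩⟩
  choose b hb hmax using hmax
  refine ⟨b, fun x y hxy => ?_, ⟨hadj, fun k => ?_⟩, hb⟩
  · obtain ⟨n, hn⟩ := hb y
    have h₁ := hconn.dist_triangle (u := x) (v := y) (w := w n)
    have h₂ := hmax x n
    rw [dist_eq_one_iff_adj.2 hxy] at h₁
    omega
  · obtain ⟨n, hn⟩ := hb (w k)
    have h₁ := hmax (w k) k
    rw [hgeo] at hn h₁
    omega

theorem RisingLine.exists_step {b : V → ℤ} {w : ℤ → V} (h : RisingLine G b w) (hb : EdgeLip G b)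
    (hconn : G.Connected) {x : V} {n : ℤ} (hn : (G.dist x (w n) : ℤ) = n - b x) (hx : x ≠ w n) :
    ∃ y, G.Adj x y ∧ b y = b x + 1 ∧ (G.dist y (w n) : ℤ) = n - b y := by
  obtain ⟨p, hp⟩ := hconn.exists_walk_length_eq_dist x (w n)
  cases p with
  | nil => exact absurd rfl hx
  | cons hxy p =>
    rename_i y
    have h₁ := dist_le p
    have h₂ := hb _ _ hxy
    have h₃ := hb.le_add_dist hconn y (w n)
    rw [h.val] at h₃
    rw [Walk.length_cons] at hp
    exact ⟨y, hxy, by omega, by omega⟩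

variable [G.LocallyFinite]

theorem lapl_intCast (f : V → ℤ) (x : V) :
    lapl G (fun v => (f v : ℝ)) x = (intLapl G f x : ℝ) := by
  simp [lapl, intLapl]

theorem abs_lapl_le_degree {f : V → ℝ} (hf : ∀ x y : V, |f x - f y| ≤ (G.dist x y : ℝ)) (x : V) :
    |lapl G f x| ≤ G.degree x := by
  refine (Finset.abs_sum_le_sum_abs _ _).trans ?_
  refine (Finset.sum_le_card_nsmul _ _ 1 fun y hy => ?_).trans (by simp)
  have hxy : G.Adj y x := ((G.mem_neighborFinset x y).1 hy).symm
  simpa [dist_eq_one_iff_adj.2 hxy] using hf y x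

/-- Nonnegative curvature makes the Laplacian of a 1-Lipschitz function nonincreasing along
rising edges. -/
theorem NonnegRicci.intLapl_le (hric : NonnegRicci G) (hconn : G.Connected) {f : V → ℤ}
    (hf : EdgeLip G f) {u v : V} (huv : G.Adj u v) (hfuv : f v = f u + 1) :
    intLapl G f v ≤ intLapl G f u := by
  have hle : ricci G u v ≤ lapl G (fun x => (f x : ℝ)) u - lapl G (fun x => (f x : ℝ)) v := by
    refine csInf_le ⟨-(G.degree u + G.degree v : ℝ), ?_⟩ ⟨_, fun x y => ?_, ?_, rfl⟩
    · rintro r ⟨g, hg, -, rfl⟩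
      have h₁ := abs_le.1 (abs_lapl_le_degree hg u)
      have h₂ := abs_le.1 (abs_lapl_le_degree hg v)
      linarith [h₁.1, h₂.2]
    · have h₁ := hf.le_add_dist hconn x y
      have h₂ := hf.le_add_dist hconn y x
      rw [G.dist_comm] at h₂
      have h₃ : |f x - f y| ≤ (G.dist x y : ℤ) := abs_le.2 ⟨by omega, by omega⟩
      exact_mod_cast h₃
    · simp [hfuv]
  have := (hric u v huv).trans hle
  rw [lapl_intCast, lapl_intCast, sub_nonneg] at this
  exact_mod_cast this

theorem neighborFinset_eq_triple [DecidableEq V] {x p q r : V} (hdeg : G.degree x ≤ 3)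
    (hp : G.Adj x p) (hq : G.Adj x q) (hr : G.Adj x r) (hpq : p ≠ q) (hpr : p ≠ r) (hqr : q ≠ r) :
    G.neighborFinset x = {p, q, r} := by
  symm
  apply Finset.eq_of_subset_of_card_le
  · intro y hy
    simp only [Finset.mem_insert, Finset.mem_singleton] at hy
    rw [mem_neighborFinset]
    rcases hy with rfl | rfl | rfl <;> assumption
  · rw [Finset.card_eq_three.2 ⟨p, q, r, hpq, hpr, hqr, rfl⟩]
    simpa using hdeg

theorem eq_of_adj_of_degree_le_three {x p q r y : V} (hdeg : G.degree x ≤ 3)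
    (hp : G.Adj x p) (hq : G.Adj x q) (hr : G.Adj x r) (hpq : p ≠ q) (hpr : p ≠ r) (hqr : q ≠ r)
    (hy : G.Adj x y) : y = p ∨ y = q ∨ y = r := by
  classical
  have := (G.mem_neighborFinset x y).2 hy
  simpa [neighborFinset_eq_triple hdeg hp hq hr hpq hpr hqr] using this

theorem intLapl_eq_of_three {x p q r : V} (hdeg : G.degree x ≤ 3)
    (hp : G.Adj x p) (hq : G.Adj x q) (hr : G.Adj x r) (hpq : p ≠ q) (hpr : p ≠ r) (hqr : q ≠ r)
    (f : V → ℤ) : intLapl G f x = f p + f q + f r - 3 * f x := by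
  classical
  rw [intLapl, neighborFinset_eq_triple hdeg hp hq hr hpq hpr hqr,
    Finset.sum_insert (by simp [hpq, hpr]), Finset.sum_pair hqr]
  ring

namespace RisingLine

variable {b : V → ℤ} {u : ℤ → V}

theorem intLapl_eq (h : RisingLine G b u) (hdeg : ∀ v, G.degree v ≤ 3) {k : ℤ} {z : V}
    (hz : G.Adj (u k) z) (hz₁ : z ≠ u (k - 1)) (hz₂ : z ≠ u (k + 1)) :
    intLapl G b (u k) = b z - k := by
  rw [intLapl_eq_of_three (hdeg _) (h.adj_pred k) (h.adj k) hz (h.ne_of_ne (by omega)) hz₁.symm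
    hz₂.symm, h.val, h.val, h.val]
  ring

/-- A nonzero Laplacian on the line comes from a third neighbour. -/
theorem exists_third (h : RisingLine G b u) (hdeg : ∀ v, G.degree v ≤ 3) {k : ℤ}
    (hk : intLapl G b (u k) ≠ 0) :
    ∃ z, G.Adj (u k) z ∧ z ≠ u (k - 1) ∧ z ≠ u (k + 1) ∧ b z = k + intLapl G b (u k) := by
  classical
  by_cases hz : ∃ z, G.Adj (u k) z ∧ z ≠ u (k - 1) ∧ z ≠ u (k + 1)
  · obtain ⟨z, hz, hz₁, hz₂⟩ := hz
    exact ⟨z, hz, hz₁, hz₂, by rw [h.intLapl_eq hdeg hz hz₁ hz₂]; ring⟩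
  · refine absurd ?_ hk
    have hN : G.neighborFinset (u k) = {u (k - 1), u (k + 1)} := by
      ext y
      simp only [mem_neighborFinset, Finset.mem_insert, Finset.mem_singleton]
      refine ⟨fun hy => ?_, ?_⟩
      · by_contra hc
        push Not at hc
        exact hz ⟨y, hy, hc⟩
      · rintro (rfl | rfl)
        exacts [h.adj_pred k, h.adj k]
    rw [intLapl, hN, Finset.sum_pair (h.ne_of_ne (by omega)), h.val, h.val, h.val]
    ring

theorem intLapl_mem_Icc (h : RisingLine G b u) (hb : EdgeLip G b) (hdeg : ∀ v, G.degree v ≤ 3)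
    (k : ℤ) : intLapl G b (u k) ∈ Set.Icc (-1) 1 := by
  by_cases hk : intLapl G b (u k) = 0
  · simp [hk]
  · obtain ⟨z, hz, -, -, hbz⟩ := h.exists_third hdeg hk
    have h₁ := hb _ _ hz
    have h₂ := hb _ _ hz.symm
    rw [h.val] at h₁ h₂
    exact ⟨by omega, by omega⟩

theorem antitone_intLapl (h : RisingLine G b u) (hb : EdgeLip G b) (hconn : G.Connected)
    (hric : NonnegRicci G) : Antitone fun k => intLapl G b (u k) :=
  antitone_int_of_succ_le fun k =>
    hric.intLapl_le hconn hb (h.adj k) (by rw [h.val, h.val])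

/-- Consecutive third neighbours at the lowest possible level are adjacent. -/
theorem adj_third (h : RisingLine G b u) (hb : EdgeLip G b) (hconn : G.Connected)
    (hric : NonnegRicci G) (hdeg : ∀ v, G.degree v ≤ 3) {k : ℤ} {z z' : V}
    (hk : intLapl G b (u (k - 1)) ≠ 1)
    (hz : G.Adj (u k) z) (hz₁ : z ≠ u (k - 1)) (hbz : b z = k - 1)
    (hz' : G.Adj (u (k + 1)) z') (hz₁' : z' ≠ u k) (hbz' : b z' = k) : G.Adj z z' := by
  have hnadj : ¬ G.Adj (u (k - 1)) z' := by
    intro hadj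
    refine hk ?_
    rw [h.intLapl_eq hdeg hadj, hbz']
    · ring
    · rintro rfl
      rw [h.val] at hbz'
      omega
    · simpa using hz₁'
  have hne : z ≠ z' := by
    rintro rfl
    omega
  have hne' : u (k - 1) ≠ z' := by
    rintro rfl
    rw [h.val] at hbz'
    omega
  by_contra hzz'
  have d₁ := hconn.one_lt_dist_of_ne_of_not_adj hne hzz'
  have d₂ := hconn.one_lt_dist_of_ne_of_not_adj hne' hnadj
  have d₃ := dist_eq_one_iff_adj.2 hz'
  have d₄ := hconn.pos_dist_of_ne hz₁'.symm
  set f : V → ℤ := fun x => max (b x) (k + 1 - G.dist x z') with hf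
  have f₁ : f (u (k - 1)) = k - 1 := by simp only [hf, h.val]; omega
  have f₂ : f (u k) = k := by simp only [hf, h.val]; omega
  have f₃ : f (u (k + 1)) = k + 1 := by simp only [hf, h.val]; omega
  have f₄ : f (u (k + 1 + 1)) ≥ k + 2 := by simp only [hf, h.val]; omega
  have f₅ : f z = k - 1 := by simp only [hf]; omega
  have f₆ : f z' = k + 1 := by simp only [hf, dist_self]; omega
  have hle := hric.intLapl_le hconn (hb.max_sub_dist hconn (k + 1) z') (h.adj k)
    (show f (u (k + 1)) = f (u k) + 1 by omega)
  have e₁ : z ≠ u (k + 1) := by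
    rintro rfl
    rw [h.val] at hbz
    omega
  have e₂ : z' ≠ u (k + 1 + 1) := by
    rintro rfl
    rw [h.val] at hbz'
    omega
  rw [intLapl_eq_of_three (hdeg _) (h.adj_pred k) (h.adj k) hz (h.ne_of_ne (by omega)) hz₁.symm
    e₁.symm, intLapl_eq_of_three (hdeg _) (h.adj k).symm (h.adj (k + 1)) hz'
    (h.ne_of_ne (by omega)) hz₁'.symm e₂.symm] at hle
  change f _ + f _ + f _ - 3 * f _ ≤ f _ + f _ + f _ - 3 * f _ at hle
  omega

/-- A choice of third neighbours at the lowest possible level, and the edges between them. -/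
theorem exists_partner (h : RisingLine G b u) (hb : EdgeLip G b) (hconn : G.Connected)
    (hric : NonnegRicci G) (hdeg : ∀ v, G.degree v ≤ 3) :
    ∃ z : ℤ → V, ∀ k, intLapl G b (u k) = -1 →
      (G.Adj (u k) (z k) ∧ z k ≠ u (k - 1) ∧ z k ≠ u (k + 1) ∧ b (z k) = k - 1) ∧
      (intLapl G b (u (k + 1)) = -1 → intLapl G b (u (k - 1)) ≠ 1 → G.Adj (z k) (z (k + 1))) := by
  have hex : ∀ k, ∃ z, intLapl G b (u k) = -1 →
      G.Adj (u k) z ∧ z ≠ u (k - 1) ∧ z ≠ u (k + 1) ∧ b z = k - 1 := fun k => by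
    by_cases hk : intLapl G b (u k) = -1
    · obtain ⟨z, hz⟩ := h.exists_third (k := k) hdeg (by simp [hk])
      exact ⟨z, fun _ => by simpa [hk, sub_eq_add_neg] using hz⟩
    · exact ⟨u k, fun hk' => absurd hk' hk⟩
  choose z hz using hex
  refine ⟨z, fun k hk => ⟨hz k hk, fun hk₁ hk₂ => ?_⟩⟩
  obtain ⟨h₁, h₂, -, h₃⟩ := hz k hk
  obtain ⟨h₄, h₅, -, h₆⟩ := hz (k + 1) hk₁
  exact h.adj_third hb hconn hric hdeg hk₂ h₁ h₂ h₃ h₄ (by simpa using h₅) (by simp [h₆])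

/-- A rising line with Laplacian constantly `-1` forces the graph to be the ladder. -/
theorem nonempty_iso_infiniteLadder (h : RisingLine G b u) (hb : EdgeLip G b)
    (hconn : G.Connected) (hric : NonnegRicci G) (hdeg : ∀ v, G.degree v ≤ 3)
    (hu : ∀ k, intLapl G b (u k) = -1) : Nonempty (G ≃g infiniteLadder) := by
  obtain ⟨z, hzu⟩ := h.exists_partner hb hconn hric hdeg
  have hz : ∀ k, G.Adj (u k) (z k) := fun k => (hzu k (hu k)).1.1
  have hbz : ∀ k, b (z k) = k - 1 := fun k => (hzu k (hu k)).1.2.2.2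
  have hline : RisingLine G (fun x => b x + 1) z :=
    ⟨fun k => (hzu k (hu k)).2 (hu _) (by simp [hu]), fun k => by simp [hbz]⟩
  have hb' : EdgeLip G fun x => b x + 1 := fun x y hxy => by simpa using hb x y hxy
  have hne : ∀ j k, u j ≠ z k := by
    intro j k he
    have : j = k - 1 := by rw [← h.val j, he, hbz]
    exact (hzu k (hu k)).1.2.1 (by rw [← he, this])
  have adj_u : ∀ k y, G.Adj (u k) y → y = u (k - 1) ∨ y = u (k + 1) ∨ y = z k := fun k y hy =>
    eq_of_adj_of_degree_le_three (hdeg _) (h.adj_pred k) (h.adj k) (hz k) (h.ne_of_ne (by omega))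
      (hne _ _) (hne _ _) hy
  have adj_z : ∀ k y, G.Adj (z k) y → y = z (k - 1) ∨ y = z (k + 1) ∨ y = u k := fun k y hy =>
    eq_of_adj_of_degree_le_three (hdeg _) (hline.adj_pred k) (hline.adj k) (hz k).symm
      (hline.ne_of_ne (by omega)) (hne _ _).symm (hne _ _).symm hy
  let φ : ℤ × Fin 2 → V := fun p => if p.2 = 0 then u p.1 else z p.1
  have hinj : Function.Injective φ := by
    rintro ⟨j, s⟩ ⟨k, t⟩ he
    fin_cases s <;> fin_cases t <;> simp [φ] at he ⊢
    · exact by_contra fun hjk => h.ne_of_ne hjk he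
    · exact hne _ _ he
    · exact hne _ _ he.symm
    · exact by_contra fun hjk => hline.ne_of_ne hjk he
  have hsurj : Function.Surjective φ := by
    intro y
    obtain ⟨p⟩ := hconn.preconnected (u 0) y
    suffices H : ∀ {x y : V}, G.Walk x y → x ∈ Set.range φ → y ∈ Set.range φ from
      H p ⟨(0, 0), rfl⟩
    intro x y p
    induction p with
    | nil => exact id
    | cons hadj p ih =>
      rintro ⟨⟨k, t⟩, rfl⟩
      apply ih
      fin_cases t
      · rcases adj_u k _ hadj with rfl | rfl | rfl
        exacts [⟨(k - 1, 0), rfl⟩, ⟨(k + 1, 0), rfl⟩, ⟨(k, 1), rfl⟩]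
      · rcases adj_z k _ hadj with rfl | rfl | rfl
        exacts [⟨(k - 1, 1), rfl⟩, ⟨(k + 1, 1), rfl⟩, ⟨(k, 0), rfl⟩]
  have adj_uz : ∀ j k, G.Adj (u j) (z k) ↔ j = k := by
    intro j k
    refine ⟨fun hjk => ?_, ?_⟩
    · rcases adj_u j _ hjk with he | he | he
      · exact absurd he.symm (hne _ _)
      · exact absurd he.symm (hne _ _)
      · exact by_contra fun hc => hline.ne_of_ne hc he.symm
    · rintro rfl
      exact hz j
  refine ⟨(RelIso.mk (Equiv.ofBijective φ ⟨hinj, hsurj⟩) ?_).symm⟩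
  rintro ⟨j, s⟩ ⟨k, t⟩
  change G.Adj (φ _) (φ _) ↔ _
  fin_cases s <;> fin_cases t <;>
    simp [φ, infiniteLadder, boxProd_adj, h.adj_iff hb, hline.adj_iff hb', adj_uz,
      G.adj_comm (z j) (u k), eq_comm]

end RisingLine

namespace RisingLine

variable {b : V → ℤ} {w : ℤ → V}

/-- From a vertex off the line one can rise until just before hitting the line. -/
theorem exists_entry (h : RisingLine G b w) (hb : EdgeLip G b) (hconn : G.Connected)
    (hric : NonnegRicci G) (hbus : ∀ x, ∃ n, (G.dist x (w n) : ℤ) = n - b x) {x : V}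
    (hx : x ∉ Set.range w) :
    ∃ m y, y ∉ Set.range w ∧ intLapl G b y ≤ intLapl G b x ∧ G.Adj (w m) y ∧ b y = m - 1 := by
  obtain ⟨n, hn⟩ := hbus x
  induction hd : G.dist x (w n) using Nat.strong_induction_on generalizing x with
  | _ d ih =>
    obtain ⟨y, hxy, hby, hy⟩ := h.exists_step hb hconn hn fun he => hx ⟨n, he.symm⟩
    by_cases hyw : y ∈ Set.range w
    · obtain ⟨m, rfl⟩ := hyw
      rw [h.val] at hby
      exact ⟨m, x, hx, le_rfl, hxy.symm, by omega⟩
    · obtain ⟨m, v, hv, hle, hv'⟩ := ih _ (by omega) hyw hy rfl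
      exact ⟨m, v, hv, hle.trans (hric.intLapl_le hconn hb hxy hby), hv'⟩

theorem exists_intLapl_eq_neg_one (h : RisingLine G b w) (hb : EdgeLip G b) (hconn : G.Connected)
    (hric : NonnegRicci G) (hdeg : ∀ v, G.degree v ≤ 3)
    (hbus : ∀ x, ∃ n, (G.dist x (w n) : ℤ) = n - b x) {x : V} (hx : x ∉ Set.range w) :
    ∃ m y, y ∉ Set.range w ∧ intLapl G b y ≤ intLapl G b x ∧ G.Adj (w m) y ∧ b y = m - 1 ∧
      ∀ k ≥ m, intLapl G b (w k) = -1 := by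
  obtain ⟨m, y, hy, hle, hadj, hby⟩ := h.exists_entry hb hconn hric hbus hx
  refine ⟨m, y, hy, hle, hadj, hby, fun k hk => ?_⟩
  have h₁ := h.antitone_intLapl hb hconn hric hk
  have h₂ := (h.intLapl_mem_Icc hb hdeg k).1
  have h₃ := h.intLapl_eq hdeg hadj (fun he => hy ⟨_, he.symm⟩) (fun he => hy ⟨_, he.symm⟩)
  simp only at h₁
  omega

/-- Towards `-∞` the line has third neighbours `z k`, and consecutive ones are adjacent. -/
theorem exists_left_partner (hconn : G.Connected) (hric : NonnegRicci G)
    (hdeg : ∀ v, G.degree v ≤ 3) (hadj : ∀ n, G.Adj (w n) (w (n + 1)))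
    (hgeo : ∀ m n : ℤ, G.dist (w m) (w n) = (m - n).natAbs) {x : V} (hx : x ∉ Set.range w) :
    ∃ (z : ℤ → V) (N : ℤ), (∀ k ≤ N, G.Adj (w k) (z k) ∧ z k ≠ w (k - 1) ∧ z k ≠ w (k + 1)) ∧
      ∀ k < N, G.Adj (z k) (z (k + 1)) := by
  obtain ⟨b, hb, h, hbus⟩ := exists_busemann (w := fun k => w (-k)) hconn
    (fun n => by simpa [add_comm, ← sub_eq_add_neg] using (hadj (-n - 1)).symm)
    (fun m n => by rw [hgeo]; omega)
  obtain ⟨m, -, -, -, -, -, hm⟩ := h.exists_intLapl_eq_neg_one (x := x) hb hconn hric hdeg hbus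
    (by rintro ⟨k, rfl⟩; exact hx ⟨_, rfl⟩)
  obtain ⟨z, hz⟩ := h.exists_partner hb hconn hric hdeg
  refine ⟨fun k => z (-k), -m - 2, fun k hk => ?_, fun k hk => ?_⟩
  · obtain ⟨⟨h₁, h₂, h₃, -⟩, -⟩ := hz (-k) (hm _ (by omega))
    simp only [neg_neg, neg_add, neg_sub] at h₁ h₂ h₃
    refine ⟨h₁, ?_, ?_⟩
    · rwa [sub_eq_add_neg]
    · rwa [sub_neg_eq_add, add_comm 1 k] at h₂
  · have := (hz (-(k + 1)) (hm _ (by omega))).2 (hm _ (by omega)) (by rw [hm _ (by omega)]; simp)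
    rw [show -(k + 1) + 1 = -k by ring] at this
    exact this.symm

end RisingLine

theorem intLapl_left_partner (hdeg : ∀ v, G.degree v ≤ 3) {b : V → ℤ} {w z : ℤ → V} {N c k : ℤ}
    (h : RisingLine G b w)
    (hz : ∀ j ≤ N, G.Adj (w j) (z j) ∧ z j ≠ w (j - 1) ∧ z j ≠ w (j + 1))
    (hzz : ∀ j < N, G.Adj (z j) (z (j + 1))) (hc : ∀ j ≤ N, intLapl G b (w j) = c) (hk : k < N) :
    intLapl G b (z k) = -c := by
  have hbz : ∀ j ≤ N, b (z j) = j + c := fun j hj => by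
    have := h.intLapl_eq hdeg (hz j hj).1 (hz j hj).2.1 (hz j hj).2.2
    rw [hc j hj] at this
    omega
  have hz₁ : G.Adj (z k) (z (k - 1)) := by simpa using (hzz (k - 1) (by omega)).symm
  rw [intLapl_eq_of_three (hdeg _) (hz k hk.le).1.symm hz₁ (hzz k hk), h.val, hbz _ hk.le,
    hbz _ (by omega), hbz _ (by omega)]
  · ring
  · have := (hz (k - 1) (by omega)).2.2
    rw [sub_add_cancel] at this
    exact this.symm
  · have := (hz (k + 1) (by omega)).2.1
    rw [add_sub_cancel_right] at this
    exact this.symm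
  · intro he
    have h₁ := hbz (k - 1) (by omega)
    have h₂ := hbz (k + 1) (by omega)
    rw [he] at h₁
    omega

/-- If the left partner rises one step ahead of the line, it extends to a rising line of constant
Laplacian `-1`. -/
theorem nonempty_iso_of_left_partner_ahead (hconn : G.Connected) (hric : NonnegRicci G)
    (hdeg : ∀ v, G.degree v ≤ 3) {b : V → ℤ} {w z : ℤ → V} {N : ℤ}
    (h : RisingLine G b w) (hb : EdgeLip G b)
    (hbus : ∀ x, ∃ n, (G.dist x (w n) : ℤ) = n - b x)
    (hz : ∀ j ≤ N, G.Adj (w j) (z j) ∧ z j ≠ w (j - 1) ∧ z j ≠ w (j + 1))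
    (hzz : ∀ j < N, G.Adj (z j) (z (j + 1))) (hc : ∀ j ≤ N, intLapl G b (w j) = 1) :
    Nonempty (G ≃g infiniteLadder) := by
  have hbz : ∀ j ≤ N, b (z j) = j + 1 := fun j hj => by
    have := h.intLapl_eq hdeg (hz j hj).1 (hz j hj).2.1 (hz j hj).2.2
    rw [hc j hj] at this
    omega
  obtain ⟨s, hs₀, hs, hbs⟩ := exists_rising_ray (G := G) (b := b) (fun x => by
    obtain ⟨n, hn⟩ := hbus x
    by_cases hx : x = w n
    · exact ⟨w (n + 1), hx ▸ h.adj n, by rw [hx, h.val, h.val]⟩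
    · obtain ⟨y, hxy, hby, -⟩ := h.exists_step hb hconn hn hx
      exact ⟨y, hxy, hby⟩) (z N)
  let u : ℤ → V := fun j => if j ≤ N + 1 then z (j - 1) else s (j - (N + 1)).toNat
  have hu₁ : ∀ j ≤ N + 1, u j = z (j - 1) := fun j hj => if_pos hj
  have hu₂ : ∀ j ≥ N + 1, u j = s (j - (N + 1)).toNat := by
    intro j hj
    rcases hj.lt_or_eq with hj | rfl
    · exact if_neg (by omega)
    · simp [u, hs₀]
  have hu : RisingLine G b u := by
    refine ⟨fun k => ?_, fun k => ?_⟩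
    · rcases lt_or_ge k (N + 1) with hk | hk
      · rw [hu₁ k hk.le, hu₁ (k + 1) (by omega)]
        simpa using hzz (k - 1) (by omega)
      · rw [hu₂ k hk, hu₂ (k + 1) (by omega),
          show (k + 1 - (N + 1)).toNat = (k - (N + 1)).toNat + 1 by omega]
        exact hs _
    · rcases le_total k (N + 1) with hk | hk
      · rw [hu₁ k hk, hbz _ (by omega)]
        ring
      · rw [hu₂ k hk, hbs, hbz N le_rfl]
        omega
  refine hu.nonempty_iso_infiniteLadder hb hconn hric hdeg fun k => ?_
  have h₁ := hu.antitone_intLapl hb hconn hric (min_le_left k N)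
  have h₂ := (hu.intLapl_mem_Icc hb hdeg k).1
  simp only at h₁
  rw [hu₁ (min k N) (by omega), intLapl_left_partner hdeg h hz hzz hc (by omega)] at h₁
  omega

/-- The left partner cannot rise level with the line. -/
theorem not_left_partner_level (hconn : G.Connected) (hric : NonnegRicci G)
    (hdeg : ∀ v, G.degree v ≤ 3) {b : V → ℤ} {w z : ℤ → V} {N : ℤ}
    (h : RisingLine G b w) (hb : EdgeLip G b)
    (hbus : ∀ x, ∃ n, (G.dist x (w n) : ℤ) = n - b x)
    (hz : ∀ j ≤ N, G.Adj (w j) (z j) ∧ z j ≠ w (j - 1) ∧ z j ≠ w (j + 1))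
    (hzz : ∀ j < N, G.Adj (z j) (z (j + 1))) (hc : ∀ j ≤ N, intLapl G b (w j) = 0) : False := by
  have hne : ∀ k, intLapl G b (w k) ≠ 1 := by
    intro k hk
    have h₁ := h.antitone_intLapl hb hconn hric (min_le_left k N)
    simp only [hc _ (min_le_right k N)] at h₁
    omega
  have hoff : z (N - 1) ∉ Set.range w := by
    rintro ⟨j, hj⟩
    obtain ⟨h₁, h₂, h₃⟩ := hz (N - 1) (by omega)
    have h₄ := h.intLapl_eq hdeg h₁ h₂ h₃
    rw [hc _ (by omega), ← hj, h.val] at h₄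
    rw [← hj, show j = N - 1 by omega] at h₁
    exact G.irrefl h₁
  obtain ⟨m, y, hy, hle, hadj, hby, hm⟩ :=
    h.exists_intLapl_eq_neg_one hb hconn hric hdeg hbus hoff
  obtain ⟨t, ht⟩ := h.exists_partner hb hconn hric hdeg
  obtain ⟨⟨h₁, h₂, h₃, h₄⟩, h₅⟩ := ht (m + 1) (hm _ (by omega))
  have h₆ := h₅ (hm _ (by omega)) (hne _)
  obtain ⟨⟨h₇, h₈, -, h₁₀⟩, -⟩ := ht (m + 1 + 1) (hm _ (by omega))
  have hyt : G.Adj y (t (m + 1)) := h.adj_third hb hconn hric hdeg (hne _) hadj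
    (fun he => hy ⟨_, he.symm⟩) hby h₁ (by simpa using h₂) (by omega)
  have hle' := hric.intLapl_le hconn hb hyt (by omega)
  rw [intLapl_eq_of_three (hdeg _) hyt.symm h₆ h₁.symm (fun he => by rw [← he] at h₁₀; omega)
    (fun he => hy ⟨_, he.symm⟩) (by simpa using h₈), h.val] at hle'
  rw [intLapl_left_partner hdeg h hz hzz hc (by omega)] at hle
  omega

end

/-- An infinite, connected simple graph with maximum degree at most 3 and
nonnegative Ricci curvature which contains a two-sided infinite geodesic line is isomorphic
to the two-sided infinite path `P_ℤ` or to the infinite ladder `P_ℤ □ K_2`. -/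
theorem splitting_theorem (G : SimpleGraph V) [Infinite V] [G.LocallyFinite]
    (hconn : G.Connected) (hdeg : ∀ v : V, G.degree v ≤ 3) (hric : NonnegRicci G)
    (w : ℤ → V) (hadj : ∀ n : ℤ, G.Adj (w n) (w (n + 1)))
    (hgeo : ∀ m n : ℤ, G.dist (w m) (w n) = (m - n).natAbs) :
    Nonempty (G ≃g pathZ) ∨ Nonempty (G ≃g infiniteLadder) := by
  obtain ⟨b, hb, h, hbus⟩ := exists_busemann hconn hadj hgeo
  by_cases hsurj : Function.Surjective w
  · have hinj : Function.Injective w := fun j k he => by_contra fun hjk => h.ne_of_ne hjk he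
    exact .inl ⟨(RelIso.mk (Equiv.ofBijective w ⟨hinj, hsurj⟩) (h.adj_iff hb _ _)).symm⟩
  right
  obtain ⟨x, hx⟩ : ∃ x, x ∉ Set.range w := by simpa [Function.Surjective] using hsurj
  obtain ⟨z, N, hz, hzz⟩ := RisingLine.exists_left_partner hconn hric hdeg hadj hgeo hx
  have hanti := h.antitone_intLapl hb hconn hric
  have hmem := h.intLapl_mem_Icc hb hdeg
  by_cases hone : ∃ k, intLapl G b (w k) = 1
  · obtain ⟨k, hk⟩ := hone
    refine nonempty_iso_of_left_partner_ahead (N := min k N) hconn hric hdeg h hb hbus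
      (fun j hj => hz j (by omega)) (fun j hj => hzz j (by omega)) fun j hj => ?_
    have h₁ := hanti (show j ≤ k by omega)
    have h₂ := (hmem j).2
    simp only at h₁
    omega
  · push Not at hone
    refine h.nonempty_iso_infiniteLadder hb hconn hric hdeg fun k => ?_
    by_contra hk
    refine not_left_partner_level (N := min k N) hconn hric hdeg h hb hbus
      (fun j hj => hz j (by omega)) (fun j hj => hzz j (by omega)) fun j hj => ?_
    have h₁ := hanti (show j ≤ k by omega)
    have h₂ := hmem j
    have h₃ := hmem k
    have h₄ := hone j
    simp only [Set.mem_Icc] at h₁ h₂ h₃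
    omega
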